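/- The polynomial D_n^B(q, Z) = sum over signed derangements w in D_n^B of q^{fmaj w} Z^{neg w} satisfies the recurrence D_0^B(q,Z) = 1 and D_{n+1}^B(q,Z) = (1 + qZ) * ((1 - q^{2n+2})/(1 - q^2)) * D_n^B(q,Z) + (-1)^{n+1} q^{n(n+1)} for n ≥ 0. -/

import Mathlib

open Finset

attribute [local instance] Classical.propDecidable

noncomputable section

/-- The word `x_1 x_2 ... x_n` (0-indexed) of a signed permutation of order `n`,
encoded as a pair (permutation, signs): `x_i = ±(σ(i)+1)`. -/
def sword (n : ℕ) (w : Equiv.Perm (Fin n) × (Fin n → Bool)) : ℕ → ℤ :=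
  fun i => if h : i < n then
      (if w.2 ⟨i, h⟩ then -(((w.1 ⟨i, h⟩ : ℕ) : ℤ) + 1) else (((w.1 ⟨i, h⟩ : ℕ) : ℤ) + 1))
    else 0

/-- number of negative letters -/
def negStat (n : ℕ) (x : ℕ → ℤ) : ℕ := ((Finset.range n).filter (fun i => x i < 0)).card

/-- number of positive fixed points (`x_i = i`, 1-indexed) -/
def fixPlus (n : ℕ) (x : ℕ → ℤ) : ℕ :=
  ((Finset.range n).filter (fun i => x i = (i : ℤ) + 1)).card

/-- number of negative fixed points (`x_i = -i`, 1-indexed) -/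
def fixMinus (n : ℕ) (x : ℕ → ℤ) : ℕ :=
  ((Finset.range n).filter (fun i => x i = -((i : ℤ) + 1))).card

/-- major index of the word -/
def majStat (n : ℕ) (x : ℕ → ℤ) : ℕ :=
  ∑ i ∈ Finset.range (n - 1), if x (i + 1) < x i then i + 1 else 0

/-- number of inversions of the word -/
def invStat (n : ℕ) (x : ℕ → ℤ) : ℕ :=
  ((Finset.range n ×ˢ Finset.range n).filter (fun p => p.1 < p.2 ∧ x p.2 < x p.1)).card

/-- length function `ℓ(w) = inv w + ∑_{x_i<0} |x_i|` -/
def lenStat (n : ℕ) (x : ℕ → ℤ) : ℕ :=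
  invStat n x + ∑ i ∈ Finset.range n, if x i < 0 then (x i).natAbs else 0

/-- flag-major index `fmaj = 2 maj + neg` -/
def fmajStat (n : ℕ) (x : ℕ → ℤ) : ℕ := 2 * majStat n x + negStat n x

/-- the word `x_0 ... x_{m-1}` has its leftmost trough at position `2k` (1-indexed):
`x_1 > x_2 > ... > x_{2k}` and `x_{2k} < x_{2k+1}` (with `x_{m+1} = ∞`). -/
def IsDesarAt (m k : ℕ) (x : ℕ → ℤ) : Prop :=
  1 ≤ k ∧ 2 * k ≤ m ∧ (∀ i, i + 1 < 2 * k → x (i + 1) < x i) ∧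
    (2 * k = m ∨ x (2 * k - 1) < x (2 * k))

/-- a word of length `m` is a desarrangement (empty word included) -/
def IsDesar (m : ℕ) (x : ℕ → ℤ) : Prop :=
  m = 0 ∨ ∃ k, IsDesarAt m k x

/-- the length of the longest right factor of the word of length `n`
which is a desarrangement -/
def dlen (n : ℕ) (x : ℕ → ℤ) : ℕ :=
  sSup {m | m ≤ n ∧ IsDesar m (fun i => x (n - m + i))}

/-- number of letters of `w^-` in the pixed factorization `w = w^- w^+ w^d` -/
def pixMinus (n : ℕ) (x : ℕ → ℤ) : ℕ :=
  ((Finset.range (n - dlen n x)).filter (fun i => x i < 0)).card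

/-- number of letters of `w^+` in the pixed factorization `w = w^- w^+ w^d` -/
def pixPlus (n : ℕ) (x : ℕ → ℤ) : ℕ :=
  ((Finset.range (n - dlen n x)).filter (fun i => 0 < x i)).card

/-- the number of derangements of an `m`-element set -/
def dnum (m : ℕ) : ℕ :=
  (Finset.univ.filter (fun σ : Equiv.Perm (Fin m) => ∀ i, σ i ≠ i)).card

/-- the word of an ordinary permutation of `{1, ..., m}` -/
def pword (m : ℕ) (σ : Equiv.Perm (Fin m)) : ℕ → ℤ :=
  fun i => if h : i < m then ((σ ⟨i, h⟩ : ℕ) : ℤ) + 1 else 0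

/-- the q-ascending factorial `(q;q)_m` -/
def qq {K : Type*} [CommRing K] (q : K) (m : ℕ) : K :=
  ∏ i ∈ Finset.range m, (1 - q ^ (i + 1))

/-- `D_m(q)`: generating polynomial for derangements of order `m` by major index -/
def Dmaj {K : Type*} [CommRing K] (q : K) (m : ℕ) : K :=
  ∑ σ ∈ Finset.univ.filter (fun σ : Equiv.Perm (Fin m) => ∀ i, σ i ≠ i),
    q ^ majStat m (pword m σ)

/-- `D_n^B(q,Z)`: generating polynomial for signed derangements of order `n`
(no positive fixed point) by `(fmaj, neg)`. -/
def DB {K : Type*} [CommRing K] (q Z : K) (n : ℕ) : K :=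
  ∑ w ∈ Finset.univ.filter
      (fun w : Equiv.Perm (Fin n) × (Fin n → Bool) => fixPlus n (sword n w) = 0),
    q ^ fmajStat n (sword n w) * Z ^ negStat n (sword n w)

/-!
Let `B_n` be the generating polynomial of all signed permutations of order `n` and `p = q ^ 2`.
The sum of `p ^ maj` over the shuffles of a word `u` of length `m` with `n - m` copies of a letter
not in `u` is `p ^ maj u` times the Gaussian binomial coefficient `[n choose m]_p`.

Inserting `±(n + 1)` into a signed permutation of order `n` at all positions is such a shuffle with
a single letter, so `B_{n+1} = (1 + q Z) [n + 1]_p B_n`. On the other hand, a signed permutation is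
given by the set of its positive fixed points and by a signed derangement `d` of the remaining
positions. Replacing the fixed points by `0` and making the letters below their position negative
does not change the descents, and turns the signed permutations with the same `d` into the
shuffles of one word with a power of `0`. Hence `B_n = ∑ m, [n choose m]_p D_m`.

Substituting this into the recurrence for `B_n`, by `[m + 1] [n + 1 choose m + 1] =
[n + 1] [n choose m]` and by the vanishing of the alternating sum
`∑ m, (-1) ^ m p ^ (m choose 2) [n + 1 choose m]`, the two sides of the recurrence for `D_{m+1}`
solve the same unitriangular linear system.
-/

section GaussianBinomial

variable {R : Type*}

/-- The Gaussian binomial coefficient `[n choose m]_p`, defined by Pascal's recurrence so that it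
makes sense for `p` in any semiring, roots of unity included. -/
def gaussBinom [Semiring R] (p : R) : ℕ → ℕ → R
  | _, 0 => 1
  | 0, _ + 1 => 0
  | n + 1, m + 1 => gaussBinom p n m + p ^ (m + 1) * gaussBinom p n (m + 1)

section Semiring

variable [Semiring R] (p : R)

lemma gaussBinom_zero_right (n : ℕ) : gaussBinom p n 0 = 1 := by
  cases n <;> rfl

lemma gaussBinom_succ_succ (n m : ℕ) :
    gaussBinom p (n + 1) (m + 1) = gaussBinom p n m + p ^ (m + 1) * gaussBinom p n (m + 1) :=
  rfl

lemma gaussBinom_eq_zero_of_lt {n m : ℕ} (h : n < m) : gaussBinom p n m = 0 := by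
  induction n generalizing m with
  | zero => cases m with
    | zero => contradiction
    | succ m => rfl
  | succ n ih => cases m with
    | zero => contradiction
    | succ m => rw [gaussBinom_succ_succ, ih (by lia), ih (by lia), mul_zero, add_zero]

lemma gaussBinom_self (n : ℕ) : gaussBinom p n n = 1 := by
  induction n with
  | zero => rfl
  | succ n ih =>
    rw [gaussBinom_succ_succ, ih, gaussBinom_eq_zero_of_lt p n.lt_succ_self, mul_zero, add_zero]

lemma gaussBinom_succ_self (n : ℕ) :
    gaussBinom p (n + 1) n = ∑ i ∈ range (n + 1), p ^ i := by
  induction n with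
  | zero => simp [gaussBinom_zero_right]
  | succ n ih => rw [gaussBinom_succ_succ, ih, gaussBinom_self, mul_one, sum_range_succ _ (n + 1)]

end Semiring

section CommSemiring

variable [CommSemiring R] (p : R)

lemma gaussBinom_succ_succ' (n m : ℕ) :
    gaussBinom p (n + 1) (m + 1) = p ^ (n - m) * gaussBinom p n m + gaussBinom p n (m + 1) := by
  induction n generalizing m with
  | zero => cases m <;> simp [gaussBinom]
  | succ n ih =>
    cases m with
    | zero =>
      calc gaussBinom p (n + 2) 1
          = 1 + p * (p ^ n + gaussBinom p n 1) := by
            rw [gaussBinom_succ_succ, ih 0]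
            simp [gaussBinom_zero_right]
        _ = p ^ (n + 1) * gaussBinom p (n + 1) 0 + gaussBinom p (n + 1) 1 := by
            rw [gaussBinom_succ_succ]
            simp only [gaussBinom_zero_right]
            ring
    | succ m =>
      rcases le_or_gt n m with h | h
      · have hzero := gaussBinom_eq_zero_of_lt p (show n + 1 < m + 2 by lia)
        simp [gaussBinom_succ_succ p (n + 1), hzero, Nat.sub_eq_zero_of_le h]
      · obtain ⟨d, rfl⟩ : ∃ d, n = m + 1 + d := ⟨n - (m + 1), by lia⟩
        have ih₁ := ih m
        have ih₂ := ih (m + 1)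
        rw [show m + 1 + d - m = d + 1 by lia] at ih₁
        rw [Nat.add_sub_cancel_left] at ih₂
        rw [show m + 1 + d + 1 - (m + 1) = d + 1 by lia]
        calc gaussBinom p (m + 1 + d + 2) (m + 2)
            = p ^ (d + 1) * gaussBinom p (m + 1 + d) m + gaussBinom p (m + 1 + d) (m + 1)
                + p ^ (m + 2) * (p ^ d * gaussBinom p (m + 1 + d) (m + 1)
                  + gaussBinom p (m + 1 + d) (m + 2)) := by
              rw [gaussBinom_succ_succ, ih₁, ih₂]
          _ = p ^ (d + 1) * gaussBinom p (m + 1 + d + 1) (m + 1)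
                + gaussBinom p (m + 1 + d + 1) (m + 2) := by
              rw [gaussBinom_succ_succ p _ m, gaussBinom_succ_succ p _ (m + 1)]
              ring

lemma geom_sum_mul_gaussBinom_succ_succ (n m : ℕ) :
    (∑ i ∈ range (m + 1), p ^ i) * gaussBinom p (n + 1) (m + 1) =
      (∑ i ∈ range (n + 1), p ^ i) * gaussBinom p n m := by
  induction n generalizing m with
  | zero => cases m <;> simp [gaussBinom]
  | succ n ih =>
    cases m with
    | zero =>
      have h := ih 0
      rw [gaussBinom_zero_right, zero_add, sum_range_one, pow_zero, one_mul] at h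
      rw [gaussBinom_succ_succ, zero_add, h, geom_sum_succ (n := n + 1)]
      simp only [gaussBinom_zero_right, sum_range_one]
      ring
    | succ m =>
      calc (∑ i ∈ range (m + 2), p ^ i) * gaussBinom p (n + 2) (m + 2)
          = (p * ∑ i ∈ range (m + 1), p ^ i) * gaussBinom p (n + 1) (m + 1)
              + gaussBinom p (n + 1) (m + 1)
              + p ^ (m + 2) * ((∑ i ∈ range (m + 2), p ^ i) * gaussBinom p (n + 1) (m + 2)) := by
            rw [gaussBinom_succ_succ p (n + 1), geom_sum_succ (n := m + 1)]
            ring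
        _ = p * (∑ i ∈ range (n + 1), p ^ i) * (gaussBinom p n m
              + p ^ (m + 1) * gaussBinom p n (m + 1)) + gaussBinom p (n + 1) (m + 1) := by
            rw [mul_assoc p, ih m, ih (m + 1)]
            ring
        _ = (∑ i ∈ range (n + 2), p ^ i) * gaussBinom p (n + 1) (m + 1) := by
            rw [← gaussBinom_succ_succ, geom_sum_succ (n := n + 1)]
            ring

end CommSemiring

lemma sum_range_alternating_gaussBinom [CommRing R] (p : R) (n N : ℕ) :
    ∑ m ∈ range (N + 1), (-1) ^ m * p ^ m.choose 2 * gaussBinom p (n + 1) m =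
      (-1) ^ N * p ^ (N + 1).choose 2 * gaussBinom p n N := by
  induction N with
  | zero => simp [gaussBinom_zero_right]
  | succ N ih =>
    rw [sum_range_succ, ih, gaussBinom_succ_succ, Nat.choose_succ_succ' (N + 1) 1,
      Nat.choose_one_right, pow_succ (-1 : R) N, pow_add p]
    ring

end GaussianBinomial

lemma eq_of_forall_sum_unitriangular_mul_eq {R : Type*} [Semiring R] [IsLeftCancelAdd R]
    {c : ℕ → ℕ → R} (hc : ∀ n, c n n = 1) {a b : ℕ → R}
    (h : ∀ n, ∑ m ∈ range (n + 1), c n m * a m = ∑ m ∈ range (n + 1), c n m * b m) (n : ℕ) :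
    a n = b n := by
  induction n using Nat.strong_induction_on with
  | _ n ih =>
    have hn := h n
    rw [sum_range_succ, sum_range_succ, hc, one_mul, one_mul,
      sum_congr rfl fun m hm => by rw [ih m (mem_range.1 hm)]] at hn
    exact add_left_cancel hn

lemma sum_powersetCard_succ_range_succ {M : Type*} [AddCommMonoid M] (n m : ℕ)
    (g : Finset ℕ → M) :
    ∑ S ∈ powersetCard (m + 1) (range (n + 1)), g S =
      ∑ S ∈ powersetCard (m + 1) (range n), g S +
        ∑ S ∈ powersetCard m (range n), g (insert n S) := by
  have notMem {k : ℕ} {S : Finset ℕ} (hS : S ∈ powersetCard k (range n)) : n ∉ S :=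
    fun h => notMem_range_self ((mem_powersetCard.1 hS).1 h)
  rw [range_add_one, powersetCard_succ_insert notMem_range_self, sum_union, sum_image]
  · intro S hS T hT hST
    rw [← erase_insert (notMem hS), hST, erase_insert (notMem hT)]
  · refine disjoint_left.2 fun S hS hS' => notMem hS ?_
    obtain ⟨T, -, rfl⟩ := mem_image.1 hS'
    exact mem_insert_self n T

lemma sum_powersetCard_pred {α M : Type*} [DecidableEq α] [AddCommMonoid M] {n : ℕ} {s : Finset α}
    (hs : #s = n + 1) (g : Finset α → M) :
    ∑ t ∈ powersetCard n s, g t = ∑ a ∈ s, g (s.erase a) := by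
  symm
  refine sum_bij (fun a _ => s.erase a) (fun a ha => ?_) (fun a ha b _ hab => ?_)
    (fun t ht => ?_) fun _ _ => rfl
  · refine mem_powersetCard.2 ⟨erase_subset a s, ?_⟩
    rw [card_erase_of_mem ha, hs, Nat.add_sub_cancel]
  · exact (erase_inj s ha).1 hab
  · obtain ⟨hts, hcard⟩ := mem_powersetCard.1 ht
    obtain ⟨a, ha⟩ : ∃ a, s \ t = {a} := card_eq_one.1 (by rw [card_sdiff_of_subset hts]; lia)
    refine ⟨a, (mem_sdiff.1 (ha ▸ mem_singleton_self a)).1, ?_⟩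
    rw [erase_eq, ← ha, Finset.sdiff_sdiff_eq_self hts]

section MajorIndex

lemma majStat_congr {n : ℕ} {x y : ℕ → ℤ}
    (h : ∀ i, i + 1 < n → (x (i + 1) < x i ↔ y (i + 1) < y i)) : majStat n x = majStat n y :=
  sum_congr rfl fun i hi => if_congr (h i (by have := mem_range.1 hi; lia)) rfl rfl

lemma majStat_congr_of_forall_lt {n : ℕ} {x y : ℕ → ℤ} (h : ∀ i < n, x i = y i) :
    majStat n x = majStat n y :=
  majStat_congr fun i hi => by rw [h i (by lia), h (i + 1) hi]

lemma majStat_one (x : ℕ → ℤ) : majStat 1 x = 0 :=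
  rfl

lemma majStat_succ_succ_update (n : ℕ) (x : ℕ → ℤ) (v : ℤ) :
    majStat (n + 2) (Function.update x (n + 1) v) =
      majStat (n + 1) x + if v < x n then n + 1 else 0 := by
  have hx : majStat (n + 1) (Function.update x (n + 1) v) = majStat (n + 1) x :=
    majStat_congr_of_forall_lt fun i hi => Function.update_of_ne hi.ne v x
  have hn : Function.update x (n + 1) v n = x n := Function.update_of_ne n.lt_succ_self.ne v x
  calc majStat (n + 2) (Function.update x (n + 1) v)
      = majStat (n + 1) (Function.update x (n + 1) v) +
          if Function.update x (n + 1) v (n + 1) < Function.update x (n + 1) v n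
          then n + 1 else 0 := sum_range_succ _ n
    _ = majStat (n + 1) x + if v < x n then n + 1 else 0 := by rw [hx, hn, Function.update_self]

lemma majStat_succ_update_of_le {n : ℕ} {x : ℕ → ℤ} {v : ℤ} (h : ∀ i < n, x i ≤ v) :
    majStat (n + 1) (Function.update x n v) = majStat n x := by
  cases n with
  | zero => rfl
  | succ n =>
    rw [majStat_succ_succ_update, if_neg (h n n.lt_succ_self).not_gt, add_zero]

end MajorIndex

section Shuffle

/-- The word of which the letters at the positions in `S` spell `u` and all others are `c`:
a shuffle of `u` with a power of the letter `c`. -/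
def shuffle (S : Finset ℕ) (u : ℕ → ℤ) (c : ℤ) : ℕ → ℤ :=
  fun i => if i ∈ S then u (Nat.count (· ∈ S) i) else c

lemma shuffle_of_notMem {S : Finset ℕ} {i : ℕ} (h : i ∉ S) (u : ℕ → ℤ) (c : ℤ) :
    shuffle S u c i = c :=
  if_neg h

lemma shuffle_le {S : Finset ℕ} {u : ℕ → ℤ} {c v : ℤ} (hu : ∀ i < #S, u i ≤ v) (hc : c ≤ v)
    (i : ℕ) : shuffle S u c i ≤ v := by
  by_cases hi : i ∈ S
  · have hcount : Nat.count (· ∈ S) i < #S := by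
      simpa using Nat.count_lt_card S.finite_toSet hi
    rw [shuffle, if_pos hi]
    exact hu _ hcount
  · rwa [shuffle_of_notMem hi]

lemma shuffle_apply_orderEmb {n m : ℕ} {S : Finset (Fin n)} {f : Fin m ↪o Fin n}
    (hf : Set.range f = S) (u : ℕ → ℤ) (c : ℤ) (j : Fin m) :
    shuffle (S.map Fin.valEmbedding) u c (f j) = u j := by
  have mem_map_iff (i : ℕ) : i ∈ S.map Fin.valEmbedding ↔ ∃ k, (f k : ℕ) = i := by
    simp [← mem_coe, ← hf]
  have hcount : Nat.count (· ∈ S.map Fin.valEmbedding) (f j) = j := by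
    have hfilter : {i ∈ range (f j) | i ∈ S.map Fin.valEmbedding} =
        (Iio j).map (f.toEmbedding.trans Fin.valEmbedding) := by
      ext i
      simp only [mem_filter, mem_range, mem_map_iff, mem_map, mem_Iio]
      constructor
      · rintro ⟨hi, k, rfl⟩
        exact ⟨k, f.lt_iff_lt.1 hi, rfl⟩
      · rintro ⟨k, hk, rfl⟩
        exact ⟨f.lt_iff_lt.2 hk, k, rfl⟩
    rw [Nat.count_eq_card_filter_range, hfilter, card_map, Fin.card_Iio]
  rw [shuffle, if_pos ((mem_map_iff _).2 ⟨j, rfl⟩), hcount]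

lemma shuffle_insert {S : Finset ℕ} {n i : ℕ} (hS : S ⊆ range n) (hi : i ≤ n) (u : ℕ → ℤ)
    (c : ℤ) : shuffle (insert n S) u c i = Function.update (shuffle S u c) n (u #S) i := by
  have hcount : Nat.count (· ∈ insert n S) i = Nat.count (· ∈ S) i := by
    simp only [Nat.count_eq_card_filter_range]
    congr 1
    refine filter_congr fun j hj => ?_
    have := mem_range.1 hj
    rw [mem_insert, or_iff_right (by lia)]
  rcases hi.eq_or_lt with rfl | hi
  · have hcard : Nat.count (· ∈ S) i = #S := by
      rw [Nat.count_eq_card_filter_range, filter_mem_eq_inter, inter_eq_right.2 hS]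
    rw [Function.update_self, shuffle, if_pos (mem_insert_self i S), hcount, hcard]
  · rw [Function.update_of_ne hi.ne, shuffle, shuffle, hcount]
    simp only [mem_insert, hi.ne, false_or]

lemma majStat_update_shuffle {S : Finset ℕ} {n : ℕ} (hS : S ⊆ range n) (u : ℕ → ℤ) (c v : ℤ) :
    majStat (n + 2) (Function.update (shuffle S u c) (n + 1) v) =
      majStat (n + 1) (Function.update (shuffle S u c) n c) + if v < c then n + 1 else 0 := by
  have hn : shuffle S u c n = c := shuffle_of_notMem (fun h => notMem_range_self (hS h)) u c
  rw [majStat_succ_succ_update, hn, Function.update_eq_self_iff.2 hn.symm]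

lemma majStat_update_shuffle_insert {S : Finset ℕ} {n : ℕ} (hS : S ⊆ range n) (u : ℕ → ℤ)
    (c v : ℤ) :
    majStat (n + 2) (Function.update (shuffle (insert n S) u c) (n + 1) v) =
      majStat (n + 1) (Function.update (shuffle S u c) n (u #S)) +
        if v < u #S then n + 1 else 0 := by
  rw [majStat_succ_succ_update, shuffle_insert hS le_rfl, Function.update_self,
    majStat_congr_of_forall_lt fun i hi => shuffle_insert hS (Nat.lt_succ_iff.1 hi) u c]

variable {R : Type*} [CommSemiring R] (p : R)

/- Whatever the relative order of `a`, `c` and `v`, this is one of the two Pascal recurrences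
multiplied by a power of `p`. -/
lemma pow_mul_gaussBinom_succ_succ_of_ne {a c : ℤ} (hac : a ≠ c) (v : ℤ) (n m : ℕ) :
    p ^ ((if v < a then m + 1 else 0) + if v < c then n - m else 0) *
        gaussBinom p (n + 1) (m + 1) =
      p ^ ((if v < c then n + 1 else 0) + if c < a then m + 1 else 0) * gaussBinom p n (m + 1) +
        p ^ ((if v < a then n + 1 else 0) + if a < c then n - m else 0) * gaussBinom p n m := by
  rcases lt_or_ge n m with h | h
  · simp only [gaussBinom_eq_zero_of_lt p h, gaussBinom_eq_zero_of_lt p (h.trans m.lt_succ_self),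
      gaussBinom_eq_zero_of_lt p (Nat.succ_lt_succ h), mul_zero, add_zero]
  obtain ⟨d, rfl⟩ := Nat.exists_eq_add_of_le h
  have pascal := gaussBinom_succ_succ p (m + d) m
  have pascal' := gaussBinom_succ_succ' p (m + d) m
  rw [Nat.add_sub_cancel_left] at pascal' ⊢
  split_ifs <;> first | lia | (rw [pascal]; ring1) | (rw [pascal']; ring1)

/- The arbitrary last letter `v` carries the induction: deleting it leaves a shuffle over `range n`
followed either by `c` or by the last letter of `u`. -/
lemma sum_pow_majStat_update_shuffle (u : ℕ → ℤ) (c v : ℤ) (n m : ℕ) (hu : ∀ i < m, u i ≠ c) :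
    ∑ S ∈ powersetCard m (range n), p ^ majStat (n + 1) (Function.update (shuffle S u c) n v) =
      p ^ (majStat (m + 1) (Function.update u m v) + if v < c then n - m else 0) *
        gaussBinom p n m := by
  induction n generalizing m v with
  | zero => cases m <;> simp [gaussBinom, majStat_one]
  | succ n ih =>
    cases m with
    | zero =>
      have h := ih c 0 (by simp)
      simp only [powersetCard_zero, sum_singleton, lt_irrefl, if_false,
        gaussBinom_zero_right, mul_one] at h ⊢
      rw [majStat_update_shuffle (empty_subset _), pow_add, h]
      simp [majStat_one]
    | succ m =>
      have hum : u m ≠ c := hu m m.lt_succ_self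
      rw [sum_powersetCard_succ_range_succ]
      calc _
        _ = ∑ S ∈ powersetCard (m + 1) (range n),
              p ^ majStat (n + 1) (Function.update (shuffle S u c) n c) *
                p ^ (if v < c then n + 1 else 0) +
            ∑ S ∈ powersetCard m (range n),
              p ^ majStat (n + 1) (Function.update (shuffle S u c) n (u m)) *
                p ^ (if v < u m then n + 1 else 0) := by
          refine congr_arg₂ _ (sum_congr rfl fun S hS => ?_) (sum_congr rfl fun S hS => ?_)
          · rw [majStat_update_shuffle (mem_powersetCard.1 hS).1, pow_add]
          · rw [majStat_update_shuffle_insert (mem_powersetCard.1 hS).1,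
              (mem_powersetCard.1 hS).2, pow_add]
        _ = p ^ majStat (m + 1) u *
              (p ^ ((if v < c then n + 1 else 0) + if c < u m then m + 1 else 0) *
                  gaussBinom p n (m + 1) +
                p ^ ((if v < u m then n + 1 else 0) + if u m < c then n - m else 0) *
                  gaussBinom p n m) := by
          rw [← sum_mul, ← sum_mul, ih c (m + 1) hu,
            ih (u m) m fun i hi => hu i (hi.trans m.lt_succ_self), majStat_succ_succ_update,
            Function.update_eq_self, if_neg (lt_irrefl c)]
          ring
        _ = _ := by
          rw [← pow_mul_gaussBinom_succ_succ_of_ne p hum, majStat_succ_succ_update,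
            Nat.add_sub_add_right]
          ring

lemma sum_pow_majStat_shuffle {u : ℕ → ℤ} {c : ℤ} {n m : ℕ} (hu : ∀ i < m, u i ≠ c) :
    ∑ S ∈ powersetCard m (range n), p ^ majStat n (shuffle S u c) =
      p ^ majStat m u * gaussBinom p n m := by
  obtain ⟨v, hv⟩ := (insert c ((range m).image u)).exists_le
  have hcv : c ≤ v := hv c (mem_insert_self _ _)
  have huv (i : ℕ) (hi : i < m) : u i ≤ v :=
    hv _ (mem_insert_of_mem (mem_image_of_mem u (mem_range.2 hi)))
  calc ∑ S ∈ powersetCard m (range n), p ^ majStat n (shuffle S u c)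
      = ∑ S ∈ powersetCard m (range n),
          p ^ majStat (n + 1) (Function.update (shuffle S u c) n v) := by
        refine sum_congr rfl fun S hS => ?_
        have hS : #S = m := (mem_powersetCard.1 hS).2
        rw [majStat_succ_update_of_le fun i _ => shuffle_le (hS ▸ huv) hcv i]
    _ = p ^ majStat m u * gaussBinom p n m := by
        rw [sum_pow_majStat_update_shuffle p u c v n m hu, if_neg hcv.not_gt, add_zero,
          majStat_succ_update_of_le huv]

lemma sum_pow_majStat_shuffle_map_val {u : ℕ → ℤ} {c : ℤ} {n m : ℕ} (hu : ∀ i < m, u i ≠ c) :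
    ∑ S ∈ powersetCard m (univ : Finset (Fin n)),
        p ^ majStat n (shuffle (S.map Fin.valEmbedding) u c) =
      p ^ majStat m u * gaussBinom p n m := by
  rw [← sum_pow_majStat_shuffle p hu, ← Nat.Iio_eq_range, ← Fin.map_valEmbedding_univ,
    powersetCard_map, sum_map]
  rfl

end Shuffle

/-- Signed permutations of order `n`, in the encoding of `sword`. -/
abbrev SignedPerm (n : ℕ) : Type :=
  Equiv.Perm (Fin n) × (Fin n → Bool)

/-- The letter `±(i + 1)` of a signed permutation, negative if `b` is true. -/
def letter {n : ℕ} (b : Bool) (i : Fin n) : ℤ :=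
  if b then -((i : ℕ) + 1 : ℤ) else (i : ℕ) + 1

section Letter

variable {n : ℕ}

lemma sword_apply (w : SignedPerm n) (i : Fin n) : sword n w i = letter (w.2 i) (w.1 i) :=
  dif_pos i.2

lemma letter_neg_iff {b : Bool} {i : Fin n} : letter b i < 0 ↔ b = true := by
  grind [letter]

lemma letter_eq_add_one_iff {b : Bool} {i j : Fin n} :
    letter b i = (j : ℕ) + 1 ↔ i = j ∧ b = false := by
  grind [letter]

lemma letter_le (b : Bool) (i : Fin n) : letter b i ≤ n := by
  grind [letter]

lemma eq_of_letter_eq_letter {b b' : Bool} {i j : Fin n} (h : letter b i = letter b' j) :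
    i = j := by
  grind [letter]

lemma sword_le (w : SignedPerm n) (i : Fin n) : sword n w i ≤ n :=
  sword_apply w i ▸ letter_le _ _

lemma letter_castSucc (b : Bool) (i : Fin n) : letter b i.castSucc = letter b i :=
  rfl

lemma letter_ne_letter_last (b b' : Bool) (i : Fin n) : letter b i ≠ letter b' (Fin.last n) := by
  grind [letter]

lemma letter_lt_letter_iff_of_strictMono {m : ℕ} {f : Fin m → Fin n} (hf : StrictMono f)
    {b b' : Bool} {i j : Fin m} :
    letter b (f i) < letter b' (f j) ↔ letter b i < letter b' j := by
  have hij := hf.lt_iff_lt (a := i) (b := j)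
  have hji := hf.lt_iff_lt (a := j) (b := i)
  grind [letter]

lemma negStat_sword (w : SignedPerm n) :
    negStat n (sword n w) = ∑ i, if w.2 i = true then 1 else 0 := by
  rw [negStat, card_filter, sum_range]
  exact sum_congr rfl fun i _ => by rw [sword_apply, if_congr letter_neg_iff rfl rfl]

end Letter

section FlagMajorIndex

variable {R : Type*} [CommSemiring R] (q Z : R) {n : ℕ}

/-- The monomial of a signed permutation in `DB`. -/
def fmajWeight (w : SignedPerm n) : R :=
  q ^ fmajStat n (sword n w) * Z ^ negStat n (sword n w)

lemma fmajWeight_eq (w : SignedPerm n) :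
    fmajWeight q Z w = (q * Z) ^ negStat n (sword n w) * (q ^ 2) ^ majStat n (sword n w) := by
  rw [fmajWeight, fmajStat]
  ring

/-- The generating polynomial `B_n(q, Z)` of all signed permutations of order `n` by
`(fmaj, neg)`. -/
def signedPermGF (n : ℕ) : R :=
  ∑ w : SignedPerm n, fmajWeight q Z w

end FlagMajorIndex

namespace SignedPerm

section InsertMax

variable {n : ℕ}

/-- Insertion of the letter `±(n + 1)` at position `p` into the word of a signed permutation. -/
def insertMax (p : Fin (n + 1)) (b : Bool) (w : SignedPerm n) : SignedPerm (n + 1) :=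
  ((finSuccEquiv' p).trans (w.1.optionCongr.trans (finSuccEquiv' (Fin.last n)).symm),
    p.insertNth (α := fun _ => Bool) b w.2)

variable (p : Fin (n + 1)) (b : Bool) (w : SignedPerm n)

lemma insertMax_fst_self : (w.insertMax p b).1 p = Fin.last n := by
  simp [insertMax]

lemma insertMax_fst_succAbove (j : Fin n) :
    (w.insertMax p b).1 (p.succAbove j) = (w.1 j).castSucc := by
  simp [insertMax]

lemma insertMax_snd_self : (w.insertMax p b).2 p = b := by
  simp [insertMax]

lemma insertMax_snd_succAbove (j : Fin n) : (w.insertMax p b).2 (p.succAbove j) = w.2 j := by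
  simp [insertMax]

lemma bijective_insertMax : Function.Bijective fun t : Fin (n + 1) × Bool × SignedPerm n =>
    t.2.2.insertMax t.1 t.2.1 := by
  rw [Fintype.bijective_iff_injective_and_card]
  constructor
  · rintro ⟨p, b, w⟩ ⟨p', b', w'⟩ (h : w.insertMax p b = w'.insertMax p' b')
    obtain rfl : p = p' := (w'.insertMax p' b').1.injective <| by
      rw [insertMax_fst_self, ← h, insertMax_fst_self]
    obtain rfl : b = b' := by
      rw [← insertMax_snd_self p b w, h, insertMax_snd_self]
    have hfst : w.1 = w'.1 := Equiv.ext fun j => Fin.castSucc_injective n <| by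
      rw [← insertMax_fst_succAbove p b, h, insertMax_fst_succAbove]
    have hsnd : w.2 = w'.2 := funext fun j => by
      rw [← insertMax_snd_succAbove p b, h, insertMax_snd_succAbove]
    rw [Prod.ext hfst hsnd]
  · simp only [Fintype.card_prod, Fintype.card_fin, Fintype.card_bool, Fintype.card_perm,
      Fintype.card_fun, Nat.factorial_succ]
    ring

lemma sword_insertMax {i : ℕ} (hi : i < n + 1) :
    sword (n + 1) (w.insertMax p b) i =
      shuffle ((univ.erase p).map Fin.valEmbedding) (sword n w) (letter b (Fin.last n)) i := by
  have hrange : Set.range (Fin.succAboveOrderEmb p) = ↑(univ.erase p) := by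
    ext; simp
  lift i to Fin (n + 1) using hi
  rw [sword_apply]
  rcases Fin.eq_self_or_eq_succAbove p i with rfl | ⟨j, rfl⟩
  · rw [insertMax_fst_self, insertMax_snd_self, shuffle_of_notMem (by simp)]
  · rw [insertMax_fst_succAbove, insertMax_snd_succAbove, letter_castSucc, ← sword_apply]
    exact (shuffle_apply_orderEmb hrange _ _ j).symm

lemma negStat_sword_insertMax :
    negStat (n + 1) (sword (n + 1) (w.insertMax p b)) =
      (if b = true then 1 else 0) + negStat n (sword n w) := by
  rw [negStat_sword, negStat_sword, Fin.sum_univ_succAbove _ p, insertMax_snd_self]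
  simp only [insertMax_snd_succAbove]

variable {R : Type*} [CommSemiring R] (q Z : R)

lemma sum_fmajWeight_insertMax :
    ∑ p, fmajWeight q Z (w.insertMax p b) =
      (q * Z) ^ (if b = true then 1 else 0) * (∑ i ∈ range (n + 1), (q ^ 2) ^ i) *
        fmajWeight q Z w := by
  have hne (i : ℕ) (hi : i < n) : sword n w i ≠ letter b (Fin.last n) := by
    lift i to Fin n using hi
    exact sword_apply w i ▸ letter_ne_letter_last _ b _
  calc ∑ p, fmajWeight q Z (w.insertMax p b)
      = (q * Z) ^ (if b = true then 1 else 0) * (q * Z) ^ negStat n (sword n w) *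
          ∑ p : Fin (n + 1), (q ^ 2) ^ majStat (n + 1) (shuffle
            ((univ.erase p).map Fin.valEmbedding) (sword n w) (letter b (Fin.last n))) := by
        rw [mul_sum]
        refine sum_congr rfl fun p _ => ?_
        rw [fmajWeight_eq, negStat_sword_insertMax, pow_add,
          majStat_congr_of_forall_lt fun i hi => sword_insertMax p b w hi]
    _ = (q * Z) ^ (if b = true then 1 else 0) * (q * Z) ^ negStat n (sword n w) *
          ((q ^ 2) ^ majStat n (sword n w) * ∑ i ∈ range (n + 1), (q ^ 2) ^ i) := by
        rw [← gaussBinom_succ_self, ← sum_pow_majStat_shuffle_map_val (q ^ 2) hne,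
          sum_powersetCard_pred (card_fin (n + 1))]
    _ = _ := by
        rw [fmajWeight_eq]
        ring

end InsertMax

end SignedPerm

lemma signedPermGF_succ {R : Type*} [CommSemiring R] (q Z : R) (n : ℕ) :
    signedPermGF q Z (n + 1) =
      (1 + q * Z) * (∑ i ∈ range (n + 1), (q ^ 2) ^ i) * signedPermGF q Z n := by
  calc signedPermGF q Z (n + 1)
      = ∑ w : SignedPerm n, ∑ b, ∑ p, fmajWeight q Z (w.insertMax p b) := by
        rw [signedPermGF, ← SignedPerm.bijective_insertMax.sum_comp, Fintype.sum_prod_type_right,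
          Fintype.sum_prod_type_right]
    _ = (1 + q * Z) * (∑ i ∈ range (n + 1), (q ^ 2) ^ i) * signedPermGF q Z n := by
        rw [signedPermGF, mul_sum]
        refine sum_congr rfl fun w _ => ?_
        simp only [SignedPerm.sum_fmajWeight_insertMax, Fintype.sum_bool, if_true,
          Bool.false_eq_true, if_false, pow_one, pow_zero]
        ring

namespace SignedPerm

/-- The positions of a signed permutation which are not positive fixed points. -/
def nonfixed {n : ℕ} (w : SignedPerm n) : Finset (Fin n) :=
  {i | ¬(w.1 i = i ∧ w.2 i = false)}

lemma mem_nonfixed {n : ℕ} {w : SignedPerm n} {i : Fin n} :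
    i ∈ w.nonfixed ↔ ¬(w.1 i = i ∧ w.2 i = false) :=
  mem_filter_univ i

lemma sword_eq_add_one_iff {n : ℕ} {w : SignedPerm n} {i : Fin n} :
    sword n w i = (i : ℕ) + 1 ↔ i ∉ w.nonfixed := by
  rw [sword_apply, letter_eq_add_one_iff, mem_nonfixed, not_not]

lemma fixPlus_sword_eq_zero_iff {n : ℕ} {w : SignedPerm n} :
    fixPlus n (sword n w) = 0 ↔ w.nonfixed = univ := by
  rw [fixPlus, card_eq_zero, filter_eq_empty_iff, eq_univ_iff_forall]
  constructor
  · exact fun h i => not_not.1 fun hi => h (mem_range.2 i.2) (sword_eq_add_one_iff.2 hi)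
  · intro h i hi
    lift i to Fin n using mem_range.1 hi
    exact fun hfix => sword_eq_add_one_iff.1 hfix (h i)

section Extend

variable {n m : ℕ} (f : Fin m ↪ Fin n)

/-- The signed permutation that acts on the range of `f` as `d` does on `Fin m`, and of which
all other positions are positive fixed points. -/
def extend (d : SignedPerm m) : SignedPerm n :=
  (d.1.viaEmbedding f, Function.extend f d.2 fun _ => false)

lemma extend_fst_apply (d : SignedPerm m) (j : Fin m) : (d.extend f).1 (f j) = f (d.1 j) :=
  d.1.viaEmbedding_apply f j

lemma extend_snd_apply (d : SignedPerm m) (j : Fin m) : (d.extend f).2 (f j) = d.2 j :=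
  f.injective.extend_apply d.2 (fun _ => false) j

variable {f} in
lemma extend_fst_of_notMem {i : Fin n} (hi : i ∉ Set.range f) (d : SignedPerm m) :
    (d.extend f).1 i = i :=
  d.1.viaEmbedding_apply_of_notMem f i hi

variable {f} in
lemma extend_snd_of_notMem {i : Fin n} (hi : i ∉ Set.range f) (d : SignedPerm m) :
    (d.extend f).2 i = false :=
  Function.extend_apply' d.2 (fun _ => false) i hi

lemma extend_injective : Function.Injective (extend f) := by
  refine fun d d' h => Prod.ext (Equiv.ext fun j => f.injective ?_) (funext fun j => ?_)
  · rw [← extend_fst_apply, h, extend_fst_apply]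
  · rw [← extend_snd_apply f, h, extend_snd_apply]

lemma nonfixed_extend (d : SignedPerm m) : (d.extend f).nonfixed = d.nonfixed.map f := by
  ext i
  by_cases hi : i ∈ Set.range f
  · obtain ⟨j, rfl⟩ := hi
    rw [mem_map', mem_nonfixed, mem_nonfixed, extend_fst_apply, extend_snd_apply,
      f.injective.eq_iff]
  · refine iff_of_false (fun h => mem_nonfixed.1 h ?_) (fun h => hi ?_)
    · exact ⟨extend_fst_of_notMem hi d, extend_snd_of_notMem hi d⟩
    · obtain ⟨j, -, rfl⟩ := mem_map.1 h
      exact ⟨j, rfl⟩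

lemma exists_extend_eq {w : SignedPerm n} (hw : w.nonfixed ⊆ univ.map f) :
    ∃ d : SignedPerm m, d.extend f = w := by
  have fixed_off_range {i : Fin n} (hi : i ∉ Set.range f) : w.1 i = i ∧ w.2 i = false := by
    by_contra h
    exact hi (by simpa using hw (mem_nonfixed.2 h))
  have apply_mem_range (j : Fin m) : w.1 (f j) ∈ Set.range f := by
    by_contra h
    exact h ⟨j, (w.1.injective (fixed_off_range h).1).symm⟩
  choose g hg using apply_mem_range
  have g_injective : Function.Injective g := fun j k hjk =>
    f.injective (w.1.injective (by rw [← hg, ← hg, hjk]))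
  refine ⟨(Equiv.ofBijective g (Finite.injective_iff_bijective.1 g_injective), w.2 ∘ f),
    Prod.ext (Equiv.ext fun i => ?_) (funext fun i => ?_)⟩ <;>
  by_cases hi : i ∈ Set.range f
  · obtain ⟨j, rfl⟩ := hi
    rw [extend_fst_apply, Equiv.ofBijective_apply, hg]
  · rw [extend_fst_of_notMem hi, (fixed_off_range hi).1]
  · obtain ⟨j, rfl⟩ := hi
    exact extend_snd_apply f _ j
  · rw [extend_snd_of_notMem hi, (fixed_off_range hi).2]

lemma sum_filter_nonfixed_eq_map {M : Type*} [AddCommMonoid M] (F : SignedPerm n → M) :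
    ∑ w with w.nonfixed = univ.map f, F w =
      ∑ d : SignedPerm m with d.nonfixed = univ, F (d.extend f) := by
  have hfilter : ({w | w.nonfixed = univ.map f} : Finset (SignedPerm n)) =
      ({d | d.nonfixed = univ} : Finset (SignedPerm m)).map ⟨extend f, extend_injective f⟩ := by
    ext w
    simp only [mem_filter_univ, mem_map, Function.Embedding.coeFn_mk]
    constructor
    · intro hw
      obtain ⟨d, rfl⟩ := exists_extend_eq f hw.subset
      rw [nonfixed_extend] at hw
      exact ⟨d, map_injective f hw, rfl⟩
    · rintro ⟨d, hd, rfl⟩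
      rw [nonfixed_extend, hd]
  rw [hfilter, sum_map]
  rfl

lemma negStat_sword_extend (d : SignedPerm m) :
    negStat n (sword n (d.extend f)) = negStat m (sword m d) := by
  rw [negStat_sword, negStat_sword]
  refine (Fintype.sum_of_injective f f.injective _ _ (fun i hi => ?_) fun j => ?_).symm
  · rw [extend_snd_of_notMem hi, if_neg Bool.false_ne_true]
  · rw [extend_snd_apply]

end Extend

end SignedPerm

section ExcSplit

/-- The word `x` of length `n` with its fixed points replaced by `0` and with `n + 1` subtracted
from every letter below its position, so that excedances become the positive letters and fixed
points the letters equal to `0`. -/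
def excSplit (n : ℕ) (x : ℕ → ℤ) : ℕ → ℤ :=
  fun i => if i + 1 < x i then x i else if x i = i + 1 then 0 else x i - (n + 1)

lemma excSplit_neg_iff {n i : ℕ} {x : ℕ → ℤ} (hle : x i ≤ n) :
    excSplit n x i < 0 ↔ x i < i + 1 := by
  grind [excSplit]

lemma excSplit_pos_iff {n i : ℕ} {x : ℕ → ℤ} (hle : x i ≤ n) :
    0 < excSplit n x i ↔ i + 1 < x i := by
  grind [excSplit]

lemma excSplit_eq_zero_iff {n i : ℕ} {x : ℕ → ℤ} (hle : x i ≤ n) :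
    excSplit n x i = 0 ↔ x i = i + 1 := by
  grind [excSplit]

/- Between adjacent positions, distinct letters of different classes (below, at, above their
position) are already ordered as their classes are. -/
lemma majStat_excSplit {n : ℕ} {x : ℕ → ℤ} (hle : ∀ i < n, x i ≤ n)
    (hne : ∀ i, i + 1 < n → x (i + 1) ≠ x i) : majStat n (excSplit n x) = majStat n x := by
  refine majStat_congr fun i hi => ?_
  have := hle i (by lia)
  have := hle (i + 1) hi
  have := hne i hi
  simp only [excSplit]
  push_cast
  split_ifs <;> lia

variable {n : ℕ} (w : SignedPerm n)

lemma majStat_excSplit_sword : majStat n (excSplit n (sword n w)) = majStat n (sword n w) := by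
  refine majStat_excSplit (fun i hi => sword_le w ⟨i, hi⟩) fun i hi h => ?_
  have hword := sword_apply w ⟨i + 1, hi⟩
  have hword' := sword_apply w ⟨i, by lia⟩
  have hpos := w.1.injective (eq_of_letter_eq_letter (hword.symm.trans (h.trans hword')))
  exact i.succ_ne_self (congrArg Fin.val hpos)

lemma excSplit_sword_eq_zero_iff {i : Fin n} :
    excSplit n (sword n w) i = 0 ↔ i ∉ w.nonfixed := by
  rw [excSplit_eq_zero_iff (sword_le w i), SignedPerm.sword_eq_add_one_iff]

variable {m : ℕ} (f : Fin m ↪o Fin n) (d : SignedPerm m)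

lemma sword_extend_apply (j : Fin m) :
    sword n (d.extend f.toEmbedding) (f j) = letter (d.2 j) (f (d.1 j)) := by
  rw [sword_apply]
  exact congrArg₂ letter (d.extend_snd_apply f.toEmbedding j) (d.extend_fst_apply f.toEmbedding j)

lemma sword_extend_lt_add_one_iff (j : Fin m) :
    sword n (d.extend f.toEmbedding) (f j) < (f j : ℕ) + 1 ↔ sword m d j < (j : ℕ) + 1 := by
  rw [sword_extend_apply, sword_apply]
  exact letter_lt_letter_iff_of_strictMono f.strictMono (b' := false)

lemma add_one_lt_sword_extend_iff (j : Fin m) :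
    (f j : ℕ) + 1 < sword n (d.extend f.toEmbedding) (f j) ↔ (j : ℕ) + 1 < sword m d j := by
  rw [sword_extend_apply, sword_apply]
  exact letter_lt_letter_iff_of_strictMono f.strictMono (b := false)

lemma sword_extend_lt_sword_extend_iff (j k : Fin m) :
    sword n (d.extend f.toEmbedding) (f j) < sword n (d.extend f.toEmbedding) (f k) ↔
      sword m d j < sword m d k := by
  rw [sword_extend_apply, sword_extend_apply, sword_apply, sword_apply]
  exact letter_lt_letter_iff_of_strictMono f.strictMono

lemma excSplit_sword_extend_neg_iff (j : Fin m) :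
    excSplit n (sword n (d.extend f.toEmbedding)) (f j) < 0 ↔ excSplit m (sword m d) j < 0 := by
  rw [excSplit_neg_iff (sword_le _ (f j)), excSplit_neg_iff (sword_le d j),
    sword_extend_lt_add_one_iff]

lemma excSplit_sword_extend_pos_iff (j : Fin m) :
    0 < excSplit n (sword n (d.extend f.toEmbedding)) (f j) ↔ 0 < excSplit m (sword m d) j := by
  rw [excSplit_pos_iff (sword_le _ (f j)), excSplit_pos_iff (sword_le d j),
    add_one_lt_sword_extend_iff]

lemma excSplit_sword_extend_lt_iff (j k : Fin m) :
    excSplit n (sword n (d.extend f.toEmbedding)) (f j) <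
        excSplit n (sword n (d.extend f.toEmbedding)) (f k) ↔
      excSplit m (sword m d) j < excSplit m (sword m d) k := by
  have := sword_extend_lt_add_one_iff f d j
  have := add_one_lt_sword_extend_iff f d j
  have := sword_extend_lt_add_one_iff f d k
  have := add_one_lt_sword_extend_iff f d k
  have := sword_extend_lt_sword_extend_iff f d j k
  have := sword_le d j
  have := sword_le d k
  have := sword_le (d.extend f.toEmbedding) (f j)
  have := sword_le (d.extend f.toEmbedding) (f k)
  simp only [excSplit]
  split_ifs <;> lia

variable {f} in
lemma majStat_sword_extend {S : Finset (Fin n)} (hf : Set.range f = S) :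
    majStat n (sword n (d.extend f.toEmbedding)) =
      majStat n (shuffle (S.map Fin.valEmbedding) (excSplit m (sword m d)) 0) := by
  have mem_iff {i : Fin n} : i ∈ S ↔ i ∈ Set.range f := by rw [hf, mem_coe]
  have split_of_notMem {i : Fin n} (hi : i ∉ S) :
      excSplit n (sword n (d.extend f.toEmbedding)) i = 0 := by
    refine (excSplit_sword_eq_zero_iff _).2 fun h => hi (mem_iff.2 ?_)
    rw [SignedPerm.nonfixed_extend] at h
    obtain ⟨j, -, rfl⟩ := mem_map.1 h
    exact ⟨j, rfl⟩
  have shuffle_of_notMem {i : Fin n} (hi : i ∉ S) :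
      shuffle (S.map Fin.valEmbedding) (excSplit m (sword m d)) 0 i = 0 :=
    shuffle_of_notMem ((mem_map' Fin.valEmbedding).not.2 hi) _ _
  have lt_iff (i k : Fin n) : excSplit n (sword n (d.extend f.toEmbedding)) i <
        excSplit n (sword n (d.extend f.toEmbedding)) k ↔
      shuffle (S.map Fin.valEmbedding) (excSplit m (sword m d)) 0 i <
        shuffle (S.map Fin.valEmbedding) (excSplit m (sword m d)) 0 k := by
    by_cases hi : i ∈ S <;> by_cases hk : k ∈ S
    · obtain ⟨i, rfl⟩ := mem_iff.1 hi
      obtain ⟨k, rfl⟩ := mem_iff.1 hk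
      rw [shuffle_apply_orderEmb hf, shuffle_apply_orderEmb hf, excSplit_sword_extend_lt_iff]
    · obtain ⟨i, rfl⟩ := mem_iff.1 hi
      rw [shuffle_apply_orderEmb hf, split_of_notMem hk, shuffle_of_notMem hk,
        excSplit_sword_extend_neg_iff]
    · obtain ⟨k, rfl⟩ := mem_iff.1 hk
      rw [shuffle_apply_orderEmb hf, split_of_notMem hi, shuffle_of_notMem hi,
        excSplit_sword_extend_pos_iff]
    · rw [split_of_notMem hi, split_of_notMem hk, shuffle_of_notMem hi, shuffle_of_notMem hk]
  rw [← majStat_excSplit_sword]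
  exact majStat_congr fun i hi => lt_iff ⟨i + 1, hi⟩ ⟨i, by lia⟩

end ExcSplit

lemma sum_fmajWeight_filter_nonfixed_eq {R : Type*} [CommSemiring R] (q Z : R) {n m : ℕ}
    {S : Finset (Fin n)} (hS : #S = m) :
    ∑ w with SignedPerm.nonfixed w = S, fmajWeight q Z w =
      ∑ d : SignedPerm m with d.nonfixed = univ, (q * Z) ^ negStat m (sword m d) *
        (q ^ 2) ^ majStat n (shuffle (S.map Fin.valEmbedding) (excSplit m (sword m d)) 0) := by
  have hmap := map_orderEmbOfFin_univ S hS
  calc ∑ w with SignedPerm.nonfixed w = S, fmajWeight q Z w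
      = ∑ d : SignedPerm m with d.nonfixed = univ,
          fmajWeight q Z (d.extend (S.orderEmbOfFin hS).toEmbedding) := by
        rw [← SignedPerm.sum_filter_nonfixed_eq_map, hmap]
    _ = _ := by
        refine sum_congr rfl fun d _ => ?_
        rw [fmajWeight_eq, SignedPerm.negStat_sword_extend,
          majStat_sword_extend d (range_orderEmbOfFin S hS)]

section Recurrence

variable {R : Type*} [CommRing R] (q Z : R)

lemma DB_eq_sum_fmajWeight (m : ℕ) :
    DB q Z m = ∑ d : SignedPerm m with d.nonfixed = univ, fmajWeight q Z d :=
  sum_congr (filter_congr fun _ _ => SignedPerm.fixPlus_sword_eq_zero_iff) fun _ _ => rfl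

lemma signedPermGF_eq_sum_gaussBinom_mul_DB (n : ℕ) :
    signedPermGF q Z n = ∑ m ∈ range (n + 1), gaussBinom (q ^ 2) n m * DB q Z m := by
  have excSplit_ne {m : ℕ} {d : SignedPerm m} (hd : d.nonfixed = univ) (i : ℕ) (hi : i < m) :
      excSplit m (sword m d) i ≠ 0 := by
    lift i to Fin m using hi
    simp [excSplit_sword_eq_zero_iff, hd]
  calc signedPermGF q Z n
      = ∑ m ∈ range (n + 1), ∑ S ∈ powersetCard m univ,
          ∑ w with SignedPerm.nonfixed w = S, fmajWeight q Z w := by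
        rw [signedPermGF, ← sum_fiberwise (g := SignedPerm.nonfixed), ← powerset_univ,
          sum_powerset, card_fin]
    _ = ∑ m ∈ range (n + 1), ∑ d : SignedPerm m with d.nonfixed = univ,
          (q * Z) ^ negStat m (sword m d) * ∑ S ∈ powersetCard m (univ : Finset (Fin n)),
            (q ^ 2) ^ majStat n (shuffle (S.map Fin.valEmbedding) (excSplit m (sword m d)) 0) := by
        refine sum_congr rfl fun m _ => ?_
        rw [sum_congr rfl fun S hS =>
          sum_fmajWeight_filter_nonfixed_eq q Z (mem_powersetCard.1 hS).2, sum_comm]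
        simp only [mul_sum]
    _ = ∑ m ∈ range (n + 1), gaussBinom (q ^ 2) n m * DB q Z m := by
        refine sum_congr rfl fun m _ => ?_
        rw [DB_eq_sum_fmajWeight, mul_sum]
        refine sum_congr rfl fun d hd => ?_
        rw [sum_pow_majStat_shuffle_map_val _ (excSplit_ne (mem_filter.1 hd).2),
          majStat_excSplit_sword, fmajWeight_eq]
        ring

lemma DB_zero : DB q Z 0 = 1 := by
  simp [DB, fixPlus, fmajStat, majStat, negStat]

lemma sum_gaussBinom_mul_neg_one_pow (n : ℕ) :
    ∑ m ∈ range (n + 1), gaussBinom (q ^ 2) (n + 1) (m + 1) *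
      ((-1) ^ (m + 1) * q ^ (m * (m + 1))) = -1 := by
  have hpow (m : ℕ) : (q ^ 2) ^ (m + 1).choose 2 = q ^ (m * (m + 1)) := by
    rw [← pow_mul, Nat.choose_two_right,
      Nat.mul_div_cancel' (Nat.even_mul_pred_self (m + 1)).two_dvd, Nat.add_sub_cancel, mul_comm]
  have h := sum_range_alternating_gaussBinom (q ^ 2) n (n + 1)
  rw [gaussBinom_eq_zero_of_lt _ n.lt_succ_self, mul_zero, sum_range_succ', gaussBinom_zero_right,
    Nat.choose_zero_succ, pow_zero, pow_zero, mul_one, mul_one] at h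
  refine (sum_congr rfl fun m _ => ?_).trans (eq_neg_of_add_eq_zero_left h)
  rw [hpow, mul_comm]

lemma sum_gaussBinom_mul_DB_succ (n : ℕ) :
    ∑ m ∈ range (n + 1), gaussBinom (q ^ 2) (n + 1) (m + 1) * DB q Z (m + 1) =
      signedPermGF q Z (n + 1) - 1 := by
  rw [signedPermGF_eq_sum_gaussBinom_mul_DB, sum_range_succ' _ (n + 1), gaussBinom_zero_right,
    DB_zero, mul_one, add_sub_cancel_right]

lemma sum_gaussBinom_mul_geom_sum_mul_DB (n : ℕ) :
    ∑ m ∈ range (n + 1), gaussBinom (q ^ 2) (n + 1) (m + 1) *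
        ((1 + q * Z) * (∑ i ∈ range (m + 1), (q ^ 2) ^ i) * DB q Z m) =
      signedPermGF q Z (n + 1) := by
  rw [signedPermGF_succ, signedPermGF_eq_sum_gaussBinom_mul_DB, mul_sum]
  refine sum_congr rfl fun m _ => ?_
  linear_combination (1 + q * Z) * DB q Z m * geom_sum_mul_gaussBinom_succ_succ (q ^ 2) n m

end Recurrence

theorem stmt11_general {R : Type*} [CommRing R] (q Z : R) :
    DB q Z 0 = 1 ∧ ∀ n : ℕ, DB q Z (n + 1) =
      (1 + q * Z) * (∑ i ∈ range (n + 1), (q ^ 2) ^ i) * DB q Z n +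
        (-1) ^ (n + 1) * q ^ (n * (n + 1)) := by
  refine ⟨DB_zero q Z, fun n => ?_⟩
  refine eq_of_forall_sum_unitriangular_mul_eq
    (c := fun n m => gaussBinom (q ^ 2) (n + 1) (m + 1)) (a := fun n => DB q Z (n + 1))
    (b := fun n => (1 + q * Z) * (∑ i ∈ range (n + 1), (q ^ 2) ^ i) * DB q Z n +
      (-1) ^ (n + 1) * q ^ (n * (n + 1)))
    (fun _ => gaussBinom_self _ _) (fun n => ?_) n
  simp only [mul_add (gaussBinom _ _ _), sum_add_distrib]
  rw [sum_gaussBinom_mul_DB_succ, sum_gaussBinom_mul_geom_sum_mul_DB,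
    sum_gaussBinom_mul_neg_one_pow, sub_eq_add_neg]

lemma geom_sum_sq_eq_div {K : Type*} [Field K] (q : K) (hq : 1 - q ^ 2 ≠ 0) (n : ℕ) :
    ∑ i ∈ range (n + 1), (q ^ 2) ^ i = (1 - q ^ (2 * n + 2)) / (1 - q ^ 2) := by
  rw [eq_div_iff hq, geom_sum_mul_neg, ← pow_mul, mul_add_one]

theorem stmt11 (K : Type*) [Field K] (q Z : K) (hq : (1 : K) - q ^ 2 ≠ 0) :
    DB q Z 0 = 1 ∧
    ∀ n : ℕ, DB q Z (n + 1)
      = (1 + q * Z) * ((1 - q ^ (2 * n + 2)) / (1 - q ^ 2)) * DB q Z n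
          + (-1) ^ (n + 1) * q ^ (n * (n + 1)) := by
  simpa only [geom_sum_sq_eq_div q hq] using stmt11_general q Z
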